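/- (Theorem 2, elliptic case: groundstate of the Fokker-Planck operator with strictly positive diffusion coefficient.) Let p and q be π-periodic real trigonometric polynomials of degree at most 4 (real linear combinations of 1, cos 2θ, sin 2θ, cos 4θ, sin 4θ), and assume p(θ) > 0 for all θ. Then there exists exactly one pair (ρ, C), where C ∈ ℝ and ρ : ℝ/πℤ → [0,∞) is continuously differentiable with ∫_0^π ρ(θ) dθ = 1, satisfying the once-integrated Fokker-Planck equation p ρ′ + (p′ − q) ρ = C on ℝ/πℤ. Moreover this ρ is real analytic; equivalently, the Fokker-Planck operator ℒ* ρ = ∂_θ(p ∂_θ ρ + (p′−q)ρ) has a unique nonnegative normalized groundstate. -/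

import Mathlib

/- Statement 6 (Theorem 2, elliptic case): for π-periodic trigonometric polynomial
coefficients p > 0 and q of degree ≤ 4, the once-integrated Fokker-Planck equation
p ρ' + (p' - q) ρ = C has a unique nonnegative normalized C¹ groundstate (ρ, C),
which is moreover real analytic. -/

open MeasureTheory Real Set

namespace FokkerPlanck6

/-- A real trigonometric polynomial of degree at most 4 on `S¹_π = ℝ/πℤ`, i.e. a real
linear combination of `1, cos 2θ, sin 2θ, cos 4θ, sin 4θ`. -/
def IsTrigPoly4 (p : ℝ → ℝ) : Prop :=
  ∃ c : Fin 5 → ℝ, ∀ θ : ℝ,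
    p θ = c 0 + c 1 * Real.cos (2 * θ) + c 2 * Real.sin (2 * θ) +
      c 3 * Real.cos (4 * θ) + c 4 * Real.sin (4 * θ)

/-- The groundstate property: `ρ` is a `C¹`, nonnegative, `π`-periodic, normalized
solution of the once-integrated Fokker-Planck equation `p ρ' + (p' - q) ρ = C`. -/
def IsGroundstate (p q : ℝ → ℝ) (ρ : ℝ → ℝ) (C : ℝ) : Prop :=
  ContDiff ℝ 1 ρ ∧ Function.Periodic ρ π ∧ (∀ θ, 0 ≤ ρ θ) ∧
    (∫ θ in (0:ℝ)..π, ρ θ) = 1 ∧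
    ∀ θ, p θ * deriv ρ θ + (deriv p θ - q θ) * ρ θ = C

/-!
The flux variable `u = p ρ` turns `p ρ' + (p' - q) ρ = C` into the linear equation `u' = r u + C`
with `r = q / p`, which the integrating factor `E = exp (-∫ r)` turns into `(E u)' = C E`.

*Existence.* As `r` is `π`-periodic, `E (θ + π) = E π * E θ`, so `θ ↦ (∫ t in θ..θ + π, E t) / E θ`
is a positive periodic solution, with constant `E π - 1`.

*Uniqueness.* The difference of two groundstates has integral zero, hence a zero in each period.
By Rolle, `(E u)' = C E` vanishes somewhere between two zeros of `u = p (ρ₁ - ρ₂)`, where `C` is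
the difference of the two constants; so `C = 0`, `E u` is constant, and `u = 0`.

*Analyticity.* Both `∫ r` and `E u` are primitives of analytic functions, and a primitive of an
analytic function is analytic because its power series can be integrated term by term.
-/

open Filter Topology

section AnalyticPrimitive

variable {𝕜 E : Type*} [RCLike 𝕜] [NormedAddCommGroup E] [NormedSpace 𝕜 E]

/-- The termwise primitive of a power series in one variable. Its constant term is zero because
`(0 : 𝕜)⁻¹ = 0`. -/
noncomputable def primitiveSeries (p : FormalMultilinearSeries 𝕜 𝕜 E) :
    FormalMultilinearSeries 𝕜 𝕜 E :=
  fun n => ContinuousMultilinearMap.mkPiRing 𝕜 (Fin n) ((n : 𝕜)⁻¹ • p.coeff (n - 1))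

lemma coeff_primitiveSeries_succ (p : FormalMultilinearSeries 𝕜 𝕜 E) (n : ℕ) :
    (primitiveSeries p).coeff (n + 1) = ((n + 1 : ℕ) : 𝕜)⁻¹ • p.coeff n := by
  simp only [primitiveSeries, FormalMultilinearSeries.coeff,
    ContinuousMultilinearMap.mkPiRing_apply, Pi.one_apply, Finset.prod_const_one, one_smul]
  rfl

lemma norm_primitiveSeries_zero (p : FormalMultilinearSeries 𝕜 𝕜 E) :
    ‖primitiveSeries p 0‖ = 0 := by
  simp [primitiveSeries, ContinuousMultilinearMap.norm_mkPiRing]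

lemma norm_primitiveSeries_succ_le (p : FormalMultilinearSeries 𝕜 𝕜 E) (n : ℕ) :
    ‖primitiveSeries p (n + 1)‖ ≤ ‖p n‖ := by
  rw [FormalMultilinearSeries.norm_apply_eq_norm_coef, coeff_primitiveSeries_succ, norm_smul,
    norm_inv, RCLike.norm_natCast, FormalMultilinearSeries.norm_apply_eq_norm_coef]
  exact mul_le_of_le_one_left (norm_nonneg _) (inv_le_one_of_one_le₀ (by simp))

lemma radius_le_radius_primitiveSeries (p : FormalMultilinearSeries 𝕜 𝕜 E) :
    p.radius ≤ (primitiveSeries p).radius := by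
  refine ENNReal.le_of_forall_nnreal_lt fun s hs => ?_
  obtain ⟨B, hB, hpB⟩ := p.norm_mul_pow_le_of_lt_radius hs
  refine (primitiveSeries p).le_radius_of_bound (B * s) fun n => ?_
  rcases n with _ | n
  · rw [norm_primitiveSeries_zero, zero_mul]
    positivity
  · calc ‖primitiveSeries p (n + 1)‖ * (s : ℝ) ^ (n + 1)
        ≤ ‖p n‖ * (s : ℝ) ^ (n + 1) := by gcongr; exact norm_primitiveSeries_succ_le p n
      _ = ‖p n‖ * (s : ℝ) ^ n * s := by ring
      _ ≤ B * s := by gcongr; exact hpB n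

lemma derivSeries_primitiveSeries (p : FormalMultilinearSeries 𝕜 𝕜 E) :
    (ContinuousLinearMap.apply 𝕜 E (1 : 𝕜)).compFormalMultilinearSeries
      (primitiveSeries p).derivSeries = p := by
  funext n
  refine ContinuousMultilinearMap.ext_ring ?_
  change (primitiveSeries p).derivSeries.coeff n 1 = p.coeff n
  rw [FormalMultilinearSeries.derivSeries_coeff_one, coeff_primitiveSeries_succ,
    ← Nat.cast_smul_eq_nsmul 𝕜, smul_inv_smul₀ (Nat.cast_ne_zero.2 n.succ_ne_zero)]

variable [CompleteSpace E] {f F : 𝕜 → E} {x : 𝕜}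

lemma exists_analyticAt_eventually_hasDerivAt (hf : AnalyticAt 𝕜 f x) :
    ∃ F : 𝕜 → E, AnalyticAt 𝕜 F x ∧ ∀ᶠ z in 𝓝 x, HasDerivAt F (f z) z := by
  obtain ⟨p, r, hp⟩ := hf
  have hr : r ≤ (primitiveSeries p).radius := hp.r_le.trans (radius_le_radius_primitiveSeries p)
  let F : 𝕜 → E := fun z => (primitiveSeries p).sum (z - x)
  have hF : HasFPowerSeriesOnBall F (primitiveSeries p) x r := by
    simpa [F] using (((primitiveSeries p).hasFPowerSeriesOnBall
      (hp.r_pos.trans_le hr)).mono hp.r_pos hr).comp_sub x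
  have hF' : HasFPowerSeriesOnBall (fun z => fderiv 𝕜 F z 1) p x r := by
    simpa only [derivSeries_primitiveSeries] using!
      (ContinuousLinearMap.apply 𝕜 E (1 : 𝕜)).comp_hasFPowerSeriesOnBall hF.fderiv
  refine ⟨F, hF.analyticAt, ?_⟩
  filter_upwards [Metric.eball_mem_nhds x hp.r_pos] with z hz
  rw [hp.unique hF' hz]
  exact (hF.analyticAt_of_mem hz).differentiableAt.hasFDerivAt.hasDerivAt

lemma analyticAt_of_eventually_hasDerivAt (hf : AnalyticAt 𝕜 f x)
    (hF : ∀ᶠ z in 𝓝 x, HasDerivAt F (f z) z) : AnalyticAt 𝕜 F x := by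
  obtain ⟨G, hGan, hG⟩ := exists_analyticAt_eventually_hasDerivAt hf
  obtain ⟨ε, hε, hball⟩ := Metric.eventually_nhds_iff_ball.1 (hF.and hG)
  have hsub : ∀ z ∈ Metric.ball x ε, HasDerivAt (F - G) 0 z := fun z hz => by
    simpa using (hball z hz).1.sub (hball z hz).2
  refine (hGan.add (analyticAt_const (v := (F - G) x))).congr ?_
  filter_upwards [Metric.ball_mem_nhds x hε] with z hz
  have hconst : (F - G) z = (F - G) x :=
    Metric.isOpen_ball.is_const_of_deriv_eq_zero (convex_ball x ε).isPreconnected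
      (fun y hy => (hsub y hy).differentiableAt.differentiableWithinAt)
      (fun y hy => (hsub y hy).deriv) hz (Metric.mem_ball_self hε)
  simp [← hconst]

end AnalyticPrimitive

section LinearEquation

lemma analyticAt_of_hasDerivAt_linear {E : Type*} [NormedAddCommGroup E] [NormedSpace ℝ E]
    [CompleteSpace E] {r : ℝ → ℝ} {s u : ℝ → E} {x : ℝ} (hr : AnalyticAt ℝ r x)
    (hs : AnalyticAt ℝ s x) (hu : ∀ᶠ z in 𝓝 x, HasDerivAt u (r z • u z + s z) z) :
    AnalyticAt ℝ u x := by
  obtain ⟨R, hRan, hR⟩ := exists_analyticAt_eventually_hasDerivAt hr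
  have hprod : AnalyticAt ℝ (fun z => exp (-R z) • u z) x := by
    refine analyticAt_of_eventually_hasDerivAt
      (f := fun z => exp (-R z) • s z) (hRan.neg.rexp.smul hs) ?_
    filter_upwards [hR, hu] with z hRz huz
    refine (hRz.fun_neg.exp.fun_smul huz).congr_deriv ?_
    module
  refine (hRan.rexp.smul hprod).congr (Eventually.of_forall fun z => ?_)
  simp [smul_smul, ← exp_add]

/-- The integrating factor, normalized at `0`, of the equations `u' = r u + C`. -/
noncomputable def integratingFactor (r : ℝ → ℝ) (θ : ℝ) : ℝ :=
  exp (-∫ t in (0 : ℝ)..θ, r t)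

variable {r : ℝ → ℝ}

lemma integratingFactor_pos (r : ℝ → ℝ) (θ : ℝ) : 0 < integratingFactor r θ :=
  exp_pos _

lemma hasDerivAt_integratingFactor (hr : Continuous r) (θ : ℝ) :
    HasDerivAt (integratingFactor r) (-(r θ * integratingFactor r θ)) θ :=
  (hr.integral_hasStrictDerivAt 0 θ).hasDerivAt.fun_neg.exp.congr_deriv (by
    rw [integratingFactor]
    ring)

lemma continuous_integratingFactor (hr : Continuous r) : Continuous (integratingFactor r) :=
  continuous_iff_continuousAt.2 fun θ => (hasDerivAt_integratingFactor hr θ).continuousAt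

lemma integratingFactor_add_period {T : ℝ} (hr : Continuous r) (hper : Function.Periodic r T)
    (θ : ℝ) :
    integratingFactor r (θ + T) = integratingFactor r T * integratingFactor r θ := by
  simp only [integratingFactor]
  rw [hper.intervalIntegral_add_eq_add 0 θ fun _ _ => hr.intervalIntegrable _ _, zero_add, neg_add,
    exp_add, mul_comm]

lemma hasDerivAt_integratingFactor_mul {u : ℝ → ℝ} {C θ : ℝ} (hr : Continuous r)
    (hu : HasDerivAt u (r θ * u θ + C) θ) :
    HasDerivAt (fun t => integratingFactor r t * u t) (C * integratingFactor r θ) θ :=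
  ((hasDerivAt_integratingFactor hr θ).mul hu).congr_deriv (by ring)

lemma eq_zero_of_hasDerivAt_linear_of_two_zeros {u : ℝ → ℝ} {C a b : ℝ} (hr : Continuous r)
    (hu : ∀ θ, HasDerivAt u (r θ * u θ + C) θ) (hab : a < b) (ha : u a = 0) (hb : u b = 0) :
    C = 0 ∧ u = 0 := by
  have hEu θ := hasDerivAt_integratingFactor_mul hr (hu θ)
  have hE θ := (integratingFactor_pos r θ).ne'
  obtain ⟨ξ, -, hξ⟩ := exists_hasDerivAt_eq_zero hab
    (fun θ _ => (hEu θ).continuousAt.continuousWithinAt) (by simp only [ha, hb, mul_zero])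
    (fun θ _ => hEu θ)
  have hC : C = 0 := (mul_eq_zero.1 hξ).resolve_right (hE ξ)
  refine ⟨hC, funext fun θ => ?_⟩
  have hconst : integratingFactor r θ * u θ = integratingFactor r a * u a :=
    is_const_of_deriv_eq_zero (fun t => (hEu t).differentiableAt)
      (fun t => by rw [(hEu t).deriv, hC, zero_mul]) θ a
  rw [ha, mul_zero] at hconst
  exact (mul_eq_zero.1 hconst).resolve_left (hE θ)

/-- The positive `T`-periodic solution of `u' = r u + C` for `T`-periodic `r`; its constant is
`C = integratingFactor r T - 1`. -/
noncomputable def periodicSolution (r : ℝ → ℝ) (T θ : ℝ) : ℝ :=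
  (∫ t in θ..θ + T, integratingFactor r t) / integratingFactor r θ

variable {T : ℝ}

lemma periodicSolution_pos (hr : Continuous r) (hT : 0 < T) (θ : ℝ) :
    0 < periodicSolution r T θ :=
  div_pos
    (intervalIntegral.intervalIntegral_pos_of_pos
      ((continuous_integratingFactor hr).intervalIntegrable _ _) (integratingFactor_pos r)
      (lt_add_of_pos_right θ hT))
    (integratingFactor_pos r θ)

lemma periodic_periodicSolution (hr : Continuous r) (hper : Function.Periodic r T) :
    Function.Periodic (periodicSolution r T) T := fun θ => by
  have hshift : ∫ t in θ + T..θ + T + T, integratingFactor r t =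
      integratingFactor r T * ∫ t in θ..θ + T, integratingFactor r t := by
    simp only [← intervalIntegral.integral_comp_add_right, integratingFactor_add_period hr hper,
      intervalIntegral.integral_const_mul]
  simp only [periodicSolution]
  rw [hshift, integratingFactor_add_period hr hper,
    mul_div_mul_left _ _ (integratingFactor_pos r T).ne']

lemma hasDerivAt_periodicSolution (hr : Continuous r) (hper : Function.Periodic r T) (θ : ℝ) :
    HasDerivAt (periodicSolution r T)
      (r θ * periodicSolution r T θ + (integratingFactor r T - 1)) θ := by
  have hE := continuous_integratingFactor hr
  have hwindow : HasDerivAt (fun s => ∫ t in s..s + T, integratingFactor r t)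
      (integratingFactor r (θ + T) - integratingFactor r θ) θ := by
    rw [funext fun s => (intervalIntegral.integral_interval_sub_left
      (hE.intervalIntegrable 0 (s + T)) (hE.intervalIntegrable 0 s)).symm]
    exact ((hE.integral_hasStrictDerivAt 0 (θ + T)).hasDerivAt.comp_add_const θ T).sub
      (hE.integral_hasStrictDerivAt 0 θ).hasDerivAt
  have hne := (integratingFactor_pos r θ).ne'
  refine (hwindow.div (hasDerivAt_integratingFactor hr θ) hne).congr_deriv ?_
  rw [integratingFactor_add_period hr hper, periodicSolution]
  field_simp
  ring

lemma contDiff_periodicSolution (hr : Continuous r) (hper : Function.Periodic r T) :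
    ContDiff ℝ 1 (periodicSolution r T) := by
  have hderiv := hasDerivAt_periodicSolution hr hper
  have hdiff : Differentiable ℝ (periodicSolution r T) := fun θ => (hderiv θ).differentiableAt
  have hcont := hdiff.continuous
  refine contDiff_one_iff_deriv.2 ⟨hdiff, ?_⟩
  rw [funext fun θ => (hderiv θ).deriv]
  fun_prop

end LinearEquation

section FokkerPlanck

variable {p q : ℝ → ℝ}

lemma hasDerivAt_mul_iff_fokkerPlanck {ρ : ℝ → ℝ} {C θ : ℝ} (hp : DifferentiableAt ℝ p θ)
    (hρ : DifferentiableAt ℝ ρ θ) (hpne : p θ ≠ 0) :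
    HasDerivAt (fun t => p t * ρ t) (q θ / p θ * (p θ * ρ θ) + C) θ ↔
      p θ * deriv ρ θ + (deriv p θ - q θ) * ρ θ = C := by
  have hprod := hp.hasDerivAt.fun_mul hρ.hasDerivAt
  have hcancel : q θ / p θ * (p θ * ρ θ) = q θ * ρ θ := by field_simp
  rw [hcancel]
  constructor
  · intro h
    linear_combination hprod.unique h
  · intro h
    exact hprod.congr_deriv (by linear_combination h)

lemma analyticAt_of_fokkerPlanck {ρ : ℝ → ℝ} {C θ : ℝ} (hp : AnalyticAt ℝ p θ)
    (hq : AnalyticAt ℝ q θ) (hpne : p θ ≠ 0)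
    (hρ : ∀ᶠ t in 𝓝 θ, DifferentiableAt ℝ ρ t)
    (heq : ∀ᶠ t in 𝓝 θ, p t * deriv ρ t + (deriv p t - q t) * ρ t = C) :
    AnalyticAt ℝ ρ θ := by
  have hpne' : ∀ᶠ t in 𝓝 θ, p t ≠ 0 := hp.continuousAt.eventually_ne hpne
  have hflux : AnalyticAt ℝ (fun t => p t * ρ t) θ := by
    refine analyticAt_of_hasDerivAt_linear (hq.fun_div hp hpne) (analyticAt_const (v := C)) ?_
    filter_upwards [hpne', hp.eventually_analyticAt, hρ, heq] with t hpt hpan hρt heqt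
    exact (hasDerivAt_mul_iff_fokkerPlanck hpan.differentiableAt hρt hpt).2 heqt
  refine (hflux.fun_div hp hpne).congr ?_
  filter_upwards [hpne'] with t hpt
  exact mul_div_cancel_left₀ _ hpt

lemma isGroundstate_normalize {m : ℝ → ℝ} {C : ℝ} (hm : ContDiff ℝ 1 m)
    (hmper : Function.Periodic m π) (hmpos : ∀ θ, 0 < m θ)
    (heq : ∀ θ, p θ * deriv m θ + (deriv p θ - q θ) * m θ = C) :
    IsGroundstate p q (fun θ => (∫ t in (0 : ℝ)..π, m t)⁻¹ * m θ)
      ((∫ t in (0 : ℝ)..π, m t)⁻¹ * C) := by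
  have hmass : 0 < ∫ t in (0 : ℝ)..π, m t := intervalIntegral.intervalIntegral_pos_of_pos
    (hm.continuous.intervalIntegrable _ _) hmpos pi_pos
  refine ⟨contDiff_const.mul hm, fun θ => by simp only [hmper θ],
    fun θ => (mul_pos (inv_pos.2 hmass) (hmpos θ)).le, ?_, fun θ => ?_⟩
  · rw [intervalIntegral.integral_const_mul, inv_mul_cancel₀ hmass.ne']
  · rw [deriv_const_mul_field, ← heq θ]
    ring

lemma exists_isGroundstate (hp : ContDiff ℝ 1 p) (hpper : Function.Periodic p π)
    (hq : Continuous q) (hqper : Function.Periodic q π) (hppos : ∀ θ, 0 < p θ) :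
    ∃ ρ C, IsGroundstate p q ρ C := by
  have hpne θ := (hppos θ).ne'
  have hr : Continuous (q / p) := hq.div hp.continuous hpne
  have hrper : Function.Periodic (q / p) π := hqper.div hpper
  let w := periodicSolution (q / p) π
  have hdens : ContDiff ℝ 1 (fun θ => w θ / p θ) := (contDiff_periodicSolution hr hrper).div hp hpne
  have heq : ∀ θ, p θ * deriv (fun t => w t / p t) θ + (deriv p θ - q θ) * (w θ / p θ) =
      integratingFactor (q / p) π - 1 := fun θ => by
    refine (hasDerivAt_mul_iff_fokkerPlanck (hp.differentiable one_ne_zero θ)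
      (hdens.differentiable one_ne_zero θ) (hpne θ)).1 ?_
    simp only [fun t => mul_div_cancel₀ (w t) (hpne t)]
    exact hasDerivAt_periodicSolution hr hrper θ
  exact ⟨_, _, isGroundstate_normalize hdens ((periodic_periodicSolution hr hrper).div hpper)
    (fun θ => div_pos (periodicSolution_pos hr pi_pos θ) (hppos θ)) heq⟩

namespace IsGroundstate

variable {ρ ρ₁ ρ₂ : ℝ → ℝ} {C C₁ C₂ : ℝ}

lemma differentiable (h : IsGroundstate p q ρ C) : Differentiable ℝ ρ :=
  h.1.differentiable one_ne_zero

lemma exists_eq (h₁ : IsGroundstate p q ρ₁ C₁) (h₂ : IsGroundstate p q ρ₂ C₂) :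
    ∃ θ, ρ₁ θ = ρ₂ θ := by
  obtain ⟨hC1₁, -, -, hint₁, -⟩ := h₁
  obtain ⟨hC1₂, -, -, hint₂, -⟩ := h₂
  obtain ⟨θ, -, hθ⟩ := exists_eq_interval_average pi_ne_zero.symm
    (hC1₁.continuous.fun_sub hC1₂.continuous).continuousOn
  refine ⟨θ, sub_eq_zero.1 (hθ.trans ?_)⟩
  rw [interval_average_eq, intervalIntegral.integral_sub (hC1₁.continuous.intervalIntegrable _ _)
    (hC1₂.continuous.intervalIntegrable _ _), hint₁, hint₂, sub_self, smul_zero]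

lemma hasDerivAt_mul (hp : Differentiable ℝ p) (hpne : ∀ θ, p θ ≠ 0) (h : IsGroundstate p q ρ C)
    (θ : ℝ) : HasDerivAt (fun t => p t * ρ t) (q θ / p θ * (p θ * ρ θ) + C) θ :=
  (hasDerivAt_mul_iff_fokkerPlanck (hp θ) (h.differentiable θ) (hpne θ)).2 (h.2.2.2.2 θ)

lemma unique (hp : Differentiable ℝ p) (hq : Continuous q) (hpne : ∀ θ, p θ ≠ 0)
    (h₁ : IsGroundstate p q ρ₁ C₁) (h₂ : IsGroundstate p q ρ₂ C₂) : ρ₁ = ρ₂ ∧ C₁ = C₂ := by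
  obtain ⟨a, ha⟩ := h₁.exists_eq h₂
  have hflux : ∀ θ, HasDerivAt (fun t => p t * ρ₁ t - p t * ρ₂ t)
      (q θ / p θ * (p θ * ρ₁ θ - p θ * ρ₂ θ) + (C₁ - C₂)) θ := fun θ =>
    ((h₁.hasDerivAt_mul hp hpne θ).sub (h₂.hasDerivAt_mul hp hpne θ)).congr_deriv (by ring)
  obtain ⟨hC, hu⟩ := eq_zero_of_hasDerivAt_linear_of_two_zeros (hq.div hp.continuous hpne) hflux
    (lt_add_of_pos_right a pi_pos) (by rw [ha, sub_self])
    (by rw [h₁.2.1 a, h₂.2.1 a, ha, sub_self])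
  exact ⟨funext fun θ => mul_left_cancel₀ (hpne θ) (sub_eq_zero.1 (congrFun hu θ)),
    sub_eq_zero.1 hC⟩

end IsGroundstate

theorem groundstate_elliptic_general (hp : ContDiff ℝ 1 p) (hpper : Function.Periodic p π)
    (hq : Continuous q) (hqper : Function.Periodic q π) (hppos : ∀ θ, 0 < p θ) :
    (∃! z : (ℝ → ℝ) × ℝ, IsGroundstate p q z.1 z.2) ∧
    (∀ ρ C, IsGroundstate p q ρ C →
      ∀ θ : ℝ, AnalyticAt ℝ p θ → AnalyticAt ℝ q θ → AnalyticAt ℝ ρ θ) := by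
  have hpne θ := (hppos θ).ne'
  obtain ⟨ρ₀, C₀, h₀⟩ := exists_isGroundstate hp hpper hq hqper hppos
  refine ⟨⟨(ρ₀, C₀), h₀, fun z hz => ?_⟩, fun ρ C h θ hpan hqan => ?_⟩
  · exact Prod.ext_iff.2 (hz.unique (hp.differentiable one_ne_zero) hq hpne h₀)
  · exact analyticAt_of_fokkerPlanck hpan hqan (hpne θ) (Eventually.of_forall h.differentiable)
      (Eventually.of_forall h.2.2.2.2)

end FokkerPlanck

namespace IsTrigPoly4

variable {p : ℝ → ℝ}

lemma analyticAt (hp : IsTrigPoly4 p) (θ : ℝ) : AnalyticAt ℝ p θ := by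
  obtain ⟨c, hc⟩ := hp
  rw [funext hc]
  fun_prop

lemma contDiff {n : WithTop ℕ∞} (hp : IsTrigPoly4 p) : ContDiff ℝ n p :=
  contDiff_iff_contDiffAt.2 fun θ => (hp.analyticAt θ).contDiffAt

lemma periodic (hp : IsTrigPoly4 p) : Function.Periodic p π := by
  obtain ⟨c, hc⟩ := hp
  intro θ
  have h4 : 4 * (θ + π) = 4 * θ + 2 * π + 2 * π := by ring
  rw [hc, hc, h4, mul_add]
  simp only [cos_add_two_pi, sin_add_two_pi]

end IsTrigPoly4

/-- **Theorem 2 (elliptic case).**  If `p, q` are `π`-periodic trigonometric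
polynomials of degree `≤ 4` and `p > 0`, then there is exactly one pair `(ρ, C)` with
`ρ : ℝ/πℤ → [0,∞)` of class `C¹` and normalized solving `p ρ' + (p'-q)ρ = C`; moreover
this `ρ` is real analytic. -/
theorem groundstate_elliptic (p q : ℝ → ℝ)
    (hp : IsTrigPoly4 p) (hq : IsTrigPoly4 q)
    (hppos : ∀ θ, 0 < p θ) :
    (∃! z : (ℝ → ℝ) × ℝ, IsGroundstate p q z.1 z.2) ∧
    (∀ ρ C, IsGroundstate p q ρ C → ∀ θ : ℝ, AnalyticAt ℝ ρ θ) := by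
  obtain ⟨hunique, hanalytic⟩ := groundstate_elliptic_general hp.contDiff hp.periodic
    (hq.contDiff (n := 0)).continuous hq.periodic hppos
  exact ⟨hunique, fun ρ C h θ => hanalytic ρ C h θ (hp.analyticAt θ) (hq.analyticAt θ)⟩

end FokkerPlanck6
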